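/- Let π* be an optimal assignment for weights w and let N = |T| (the maximal number of assigned edges in any assignment). Then the perturbation δ defined by δ(a,b) = s_w(a,b) / (2N) for every edge (a,b) is an allowable perturbation for (w, π*). -/

import Mathlib

open Finset Filter Topology

/-- Cost of an assignment `π : T → A` under weights `w : A × T → ℝ`. -/
noncomputable def cost {A T : Type*} [Fintype T] (w : A × T → ℝ) (π : T → A) : ℝ :=
  ∑ b : T, w (π b, b)

/-- `πs` is an optimal assignment for weights `w`: it is injective (an assignment)
and minimizes the cost among all assignments. -/
def Optimal {A T : Type*} [Fintype T] (w : A × T → ℝ) (πs : T → A) : Prop :=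
  Function.Injective πs ∧ ∀ π : T → A, Function.Injective π → cost w πs ≤ cost w π

/-- `δ` is an allowable perturbation for `(w, πs)`: `πs` remains optimal for `w + δ`. -/
def Allowable {A T : Type*} [Fintype T] (w δ : A × T → ℝ) (πs : T → A) : Prop :=
  Optimal (w + δ) πs

-- The element-wise sensitivity of edge `(a, b)` for weights `w` and assignment `πs`.
open Classical in
noncomputable def sens {A T : Type*} [Fintype T] (w : A × T → ℝ) (πs : T → A)
    (a : A) (b : T) : ℝ :=
  if πs b = a then
    sInf {c | ∃ π : T → A, Function.Injective π ∧ π b ≠ a ∧ cost w π = c} - cost w πs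
  else
    cost w πs - sInf {c | ∃ π : T → A, Function.Injective π ∧ π b = a ∧ cost w π = c}

/-! For an assignment `π`, let `Δ = cost w π - cost w πs ≥ 0`. If `π` and `πs` differ at a task `b`,
then `π` avoids the edge `(πs b, b)` and uses the edge `(π b, b)`, so it competes in both infima
defining the sensitivities of these edges: the first is at most `Δ` and the second at least `-Δ`.
Replacing `πs b` by `π b` therefore lowers the sensitivity by at most `2 * Δ`. Divided by `2 * |T|`
and summed over the `|T|` tasks, this is a total of at most `Δ`, so `π` never becomes cheaper than
`πs`. -/

section

variable {A T : Type*} [Fintype T] {w δ : A × T → ℝ} {πs π : T → A}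

theorem cost_add (w δ : A × T → ℝ) (π : T → A) : cost (w + δ) π = cost w π + cost δ π :=
  Finset.sum_add_distrib

theorem cost_sub_cost (w : A × T → ℝ) (π σ : T → A) :
    cost w π - cost w σ = ∑ b, (w (π b, b) - w (σ b, b)) :=
  (Finset.sum_sub_distrib _ _).symm

namespace Optimal

theorem cost_sub_nonneg (hopt : Optimal w πs) (hπ : Function.Injective π) :
    0 ≤ cost w π - cost w πs :=
  sub_nonneg.2 (hopt.2 π hπ)

theorem sInf_cost_le (hopt : Optimal w πs) {P : (T → A) → Prop} (hπ : Function.Injective π)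
    (hP : P π) : sInf {c | ∃ σ : T → A, Function.Injective σ ∧ P σ ∧ cost w σ = c} ≤ cost w π := by
  refine csInf_le ⟨cost w πs, ?_⟩ ⟨π, hπ, hP, rfl⟩
  rintro _ ⟨σ, hσ, -, rfl⟩
  exact hopt.2 σ hσ

theorem sens_le_cost_sub (hopt : Optimal w πs) (hπ : Function.Injective π) {b : T}
    (hb : π b ≠ πs b) : sens w πs (πs b) b ≤ cost w π - cost w πs := by
  rw [sens, if_pos rfl]
  exact sub_le_sub_right (hopt.sInf_cost_le (P := fun σ => σ b ≠ πs b) hπ hb) _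

theorem neg_cost_sub_le_sens (hopt : Optimal w πs) (hπ : Function.Injective π) {b : T}
    (hb : π b ≠ πs b) : -(cost w π - cost w πs) ≤ sens w πs (π b) b := by
  rw [sens, if_neg hb.symm, neg_sub]
  exact sub_le_sub_left (hopt.sInf_cost_le (P := fun σ => σ b = π b) hπ rfl) _

theorem sens_sub_sens_le (hopt : Optimal w πs) (hπ : Function.Injective π) (b : T) :
    sens w πs (πs b) b - sens w πs (π b) b ≤ 2 * (cost w π - cost w πs) := by
  by_cases hb : π b = πs b
  · rw [hb, sub_self]
    exact mul_nonneg zero_le_two (hopt.cost_sub_nonneg hπ)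
  · linarith [hopt.sens_le_cost_sub hπ hb, hopt.neg_cost_sub_le_sens hπ hb]

theorem allowable_of_cost_sub_le (hopt : Optimal w πs)
    (h : ∀ π : T → A, Function.Injective π → cost δ πs - cost δ π ≤ cost w π - cost w πs) :
    Allowable w δ πs := by
  refine ⟨hopt.1, fun π hπ => ?_⟩
  rw [cost_add, cost_add]
  linarith [h π hπ]

theorem allowable_of_sub_le_div_card [Nonempty T] (hopt : Optimal w πs)
    (h : ∀ π : T → A, Function.Injective π → ∀ b,
      δ (πs b, b) - δ (π b, b) ≤ (cost w π - cost w πs) / Fintype.card T) :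
    Allowable w δ πs := by
  refine hopt.allowable_of_cost_sub_le fun π hπ => ?_
  have hcard : (Fintype.card T : ℝ) ≠ 0 := Nat.cast_ne_zero.2 Fintype.card_ne_zero
  calc cost δ πs - cost δ π
      = ∑ b, (δ (πs b, b) - δ (π b, b)) := cost_sub_cost δ πs π
    _ ≤ ∑ _b : T, (cost w π - cost w πs) / Fintype.card T :=
        Finset.sum_le_sum fun b _ => h π hπ b
    _ = cost w π - cost w πs := by
        rw [Finset.sum_const, Finset.card_univ, nsmul_eq_mul, mul_div_cancel₀ _ hcard]

end Optimal

theorem stmt7_general [Nonempty T] (hopt : Optimal w πs) :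
    Allowable w (fun e => sens w πs e.1 e.2 / (2 * (Fintype.card T : ℝ))) πs := by
  refine hopt.allowable_of_sub_le_div_card fun π hπ b => ?_
  calc sens w πs (πs b) b / (2 * (Fintype.card T : ℝ))
        - sens w πs (π b) b / (2 * (Fintype.card T : ℝ))
      = (sens w πs (πs b) b - sens w πs (π b) b) / (2 * (Fintype.card T : ℝ)) :=
        (sub_div _ _ _).symm
    _ ≤ 2 * (cost w π - cost w πs) / (2 * (Fintype.card T : ℝ)) := by
        gcongr
        exact hopt.sens_sub_sens_le hπ b
    _ = (cost w π - cost w πs) / Fintype.card T := mul_div_mul_left _ _ two_ne_zero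

end

theorem stmt7 {A T : Type*} [Fintype A] [Fintype T] [Nonempty A] [Nonempty T]
    (hT : 2 ≤ Fintype.card T) (hAT : Fintype.card T ≤ Fintype.card A)
    (w : A × T → ℝ) (πs : T → A)
    (hopt : Optimal w πs) :
    Allowable w (fun e => sens w πs e.1 e.2 / (2 * (Fintype.card T : ℝ))) πs :=
  stmt7_general hopt
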